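/- Let Q ∈ {1,−1,0}^m with counts N^+, N^-, N^0, let ε > 0, δ ∈ (0,1), s̃ ≥ 1, p ≥ 2, γ > 0, and set ε′ = ε/(4√(2 s̃ log(2/δ))). Let Q̂ ∈ {1, 0, −1} be a random sign sampled with P(Q̂ = θ) proportional to exp(ε′ f(Q, θ)/4) for θ ∈ {1, 0, −1}. If f(Q, 1) = N^+ − N^0 − N^- ≥ 8(γ+1)√(2 s̃ log(2/δ)) log p / ε, then P(Q̂ = 1) ≥ 1 − 2 p^{−γ−1}. -/

import Mathlib

/-!
For `θ ≠ 1` one has `f(Q, θ) ≤ -f(Q, 1)`, so a large `f(Q, 1)` separates the score of `1` from both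
others by `ε′ f(Q, 1) / 2`. The exponential mechanism selects a candidate trailing another one by a
score gap `t` with probability at most `exp (-t)`; the threshold on `f(Q, 1)` is the one that makes
this `p ^ (-γ - 1)`, and there are two competing signs.
-/

open MeasureTheory ProbabilityTheory Real

instance : MeasurableSpace SignType := ⊤

/-- Number of coordinates reporting `+1`. -/
def Nplus {m : ℕ} (Q : Fin m → SignType) : ℕ := (Finset.univ.filter fun j => Q j = 1).card

/-- Number of coordinates reporting `-1`. -/
def Nminus {m : ℕ} (Q : Fin m → SignType) : ℕ := (Finset.univ.filter fun j => Q j = -1).card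

/-- Number of coordinates reporting `0`. -/
def Nzero {m : ℕ} (Q : Fin m → SignType) : ℕ := (Finset.univ.filter fun j => Q j = 0).card

/-- Utility functions `f(Q, θ)` for `θ ∈ {1, -1, 0}`. -/
def utilFn {m : ℕ} (Q : Fin m → SignType) : SignType → ℤ
  | SignType.pos => (Nplus Q : ℤ) - Nzero Q - Nminus Q
  | SignType.neg => (Nminus Q : ℤ) - Nzero Q - Nplus Q
  | SignType.zero => min ((Nplus Q : ℤ) + Nzero Q - Nminus Q) ((Nminus Q : ℤ) + Nzero Q - Nplus Q)

/-- The softmax of the scores `s`: the probability with which the exponential mechanism selects `a`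
when `s` is the utility already multiplied by the privacy scale. -/
noncomputable def softmax {ι : Type*} [Fintype ι] (s : ι → ℝ) (a : ι) : ℝ :=
  exp (s a) / ∑ b, exp (s b)

section Softmax

variable {ι : Type*} [Fintype ι]

theorem sum_softmax [Nonempty ι] (s : ι → ℝ) : ∑ a, softmax s a = 1 := by
  simp only [softmax, ← Finset.sum_div]
  exact div_self (Finset.sum_pos (fun b _ => exp_pos (s b)) Finset.univ_nonempty).ne'

theorem softmax_le_exp_sub (s : ι → ℝ) (a b : ι) : softmax s b ≤ exp (s b - s a) := by
  rw [softmax, exp_sub]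
  gcongr
  exact Finset.single_le_sum (fun i _ => (exp_pos (s i)).le) (Finset.mem_univ a)

theorem one_sub_card_sub_one_mul_exp_neg_le_softmax {s : ι → ℝ} {a : ι} {t : ℝ}
    (hgap : ∀ b ≠ a, s b + t ≤ s a) :
    1 - (Fintype.card ι - 1) * exp (-t) ≤ softmax s a := by
  classical
  have : Nonempty ι := ⟨a⟩
  have htotal : softmax s a + ∑ b ∈ Finset.univ.erase a, softmax s b = 1 := by
    rw [Finset.add_sum_erase _ _ (Finset.mem_univ a), sum_softmax]
  have hother : ∀ b ∈ Finset.univ.erase a, softmax s b ≤ exp (-t) := fun b hb =>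
    (softmax_le_exp_sub s a b).trans <|
      exp_le_exp.mpr (by linarith [hgap b (Finset.ne_of_mem_erase hb)])
  have hcard : ((Finset.univ.erase a).card : ℝ) = Fintype.card ι - 1 := by
    rw [Finset.cast_card_erase_of_mem (Finset.mem_univ a), Finset.card_univ]
  have hrest := Finset.sum_le_card_nsmul _ _ _ hother
  rw [nsmul_eq_mul, hcard] at hrest
  linarith

end Softmax

theorem utilFn_le_neg_utilFn_one {m : ℕ} (Q : Fin m → SignType) {θ : SignType} (hθ : θ ≠ 1) :
    utilFn Q θ ≤ -utilFn Q 1 := by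
  change utilFn Q θ ≤ -((Nplus Q : ℤ) - Nzero Q - Nminus Q)
  cases θ with
  | pos => exact absurd rfl hθ
  | neg => simp only [utilFn]; omega
  | zero => simp only [utilFn]; omega

theorem one_sub_two_mul_exp_neg_le_softmax_utilFn {m : ℕ} (Q : Fin m → SignType) {c t : ℝ}
    (hc : 0 ≤ c) (ht : 2 * t ≤ c * utilFn Q 1) :
    1 - 2 * exp (-t) ≤ softmax (fun θ => c * utilFn Q θ / 4) 1 := by
  have hgap : ∀ θ ≠ 1, c * utilFn Q θ / 4 + t ≤ c * utilFn Q 1 / 4 := fun θ hθ => by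
    have hθ' : (utilFn Q θ : ℝ) ≤ -utilFn Q 1 := mod_cast utilFn_le_neg_utilFn_one Q hθ
    linarith [mul_le_mul_of_nonneg_left hθ' hc]
  have hcard : (Fintype.card SignType : ℝ) - 1 = 2 := by
    rw [show Fintype.card SignType = 3 from rfl]
    norm_num
  exact hcard ▸ one_sub_card_sub_one_mul_exp_neg_le_softmax hgap

theorem expMech_selects_pos_general {Ω : Type*} [MeasurableSpace Ω] (P : Measure Ω) {m : ℕ}
    {st p ε δ : ℝ} (γ : ℝ) (hst : 0 < st) (hp : 0 < p) (hε : 0 < ε) (hδ0 : 0 < δ) (hδ2 : δ < 2)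
    (Q : Fin m → SignType) (Qhat : Ω → SignType)
    (hlaw : ∀ θ : SignType, P {ω | Qhat ω = θ} =
      ENNReal.ofReal
        (exp (ε / (4 * √(2 * st * log (2 / δ))) * (utilFn Q θ : ℝ) / 4) /
          ∑ θ' : SignType, exp (ε / (4 * √(2 * st * log (2 / δ))) * (utilFn Q θ' : ℝ) / 4)))
    (hf : 8 * (γ + 1) * √(2 * st * log (2 / δ)) * log p / ε ≤ (utilFn Q 1 : ℝ)) :
    ENNReal.ofReal (1 - 2 * p ^ (-γ - 1)) ≤ P {ω | Qhat ω = 1} := by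
  have hlog : 0 < log (2 / δ) := log_pos ((one_lt_div hδ0).mpr hδ2)
  set S := √(2 * st * log (2 / δ))
  have hS : 0 < S := sqrt_pos.mpr (by positivity)
  have hpow : p ^ (-γ - 1) = exp (-((γ + 1) * log p)) := by
    rw [rpow_def_of_pos hp]
    ring_nf
  have hmargin : 2 * ((γ + 1) * log p) ≤ ε / (4 * S) * utilFn Q 1 :=
    calc 2 * ((γ + 1) * log p)
        = ε / (4 * S) * (8 * (γ + 1) * S * log p / ε) := by field_simp; ring
      _ ≤ ε / (4 * S) * utilFn Q 1 := by gcongr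
  rw [hlaw 1, hpow]
  exact ENNReal.ofReal_le_ofReal
    (one_sub_two_mul_exp_neg_le_softmax_utilFn Q (by positivity) hmargin)

/-- if `Q̂` is sampled from the exponential mechanism with utilities
`f(Q, θ)` at privacy level `ε′ = ε/(4√(2 s̃ log(2/δ)))`, and
`f(Q,1) ≥ 8(γ+1)√(2 s̃ log(2/δ)) log p / ε`, then `P(Q̂ = 1) ≥ 1 − 2 p^{−γ−1}`. -/
theorem expMech_selects_pos {Ω : Type*} [MeasurableSpace Ω]
    (P : Measure Ω) [IsProbabilityMeasure P]
    (m st p : ℕ) (hst : 1 ≤ st) (hp : 2 ≤ p)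
    (ε δ γ : ℝ) (hε : 0 < ε) (hδ0 : 0 < δ) (hδ1 : δ < 1) (hγ : 0 < γ)
    (Q : Fin m → SignType) (Qhat : Ω → SignType)
    (hlaw : ∀ θ : SignType, P {ω | Qhat ω = θ} =
      ENNReal.ofReal
        (Real.exp (ε / (4 * Real.sqrt (2 * st * Real.log (2 / δ))) * (utilFn Q θ : ℝ) / 4) /
          ∑ θ' : SignType,
            Real.exp (ε / (4 * Real.sqrt (2 * st * Real.log (2 / δ))) * (utilFn Q θ' : ℝ) / 4)))
    (hf : 8 * (γ + 1) * Real.sqrt (2 * st * Real.log (2 / δ)) * Real.log p / ε ≤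
      (utilFn Q 1 : ℝ)) :
    ENNReal.ofReal (1 - 2 * (p : ℝ) ^ (-γ - 1)) ≤ P {ω | Qhat ω = 1} := by
  exact expMech_selects_pos_general P γ (Nat.cast_pos.mpr hst)
    (Nat.cast_pos.mpr (zero_lt_two.trans_le hp)) hε hδ0 (hδ1.trans one_lt_two) Q Qhat hlaw hf
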